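/- Let V be a ℤ-graded vertex algebra, W = ⨁_{n∈ℕ} W_{(n)} an ℕ-graded vector space, and Y_W : V ⊗ W → W((x)) a linear map such that u_n maps W_{(k)} to W_{(k+m−n−1)} for u ∈ V_{(m)}, and Y_W(1, x) = id_W. Assume that for all u, v ∈ V and w ∈ W there exist k, l ∈ ℤ with v_n w = 0 for n ≥ k and u_n w = 0 for n ≥ l, and that for all p, q ∈ ℤ the iterate formula u_p v_q w = Σ_{i=0}^{k−q−1} Σ_{j=0}^{l} C(p−l,i) C(l,j) (u_{p−l−i+j}v)_{q+l+i−j} w (for q < k) and the residue vanishing Res_{x_0}Res_{x_2} x_0^{p−l−i} x_2^{q+i} (x_0+x_2)^l Y_W(Y(u,x_0)v, x_2)w = 0 (for i ≥ k−q) hold. Then (W, Y_W) is an ℕ-gradable weak V-module; in particular Y_W satisfies the Jacobi identity. -/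

import Mathlib

open scoped BigOperators

/-- Generalized binomial coefficient `C(a, i)` for `a : ℤ`, `i : ℕ`, valued in `ℂ`. -/
noncomputable def gb (a : ℤ) (i : ℕ) : ℂ :=
  (∏ j ∈ Finset.range i, ((a : ℂ) - (j : ℂ))) / (Nat.factorial i : ℂ)

/-- A vertex algebra, presented through the coefficient operators
`coeff u n = u_n = Res_x x^n Y(u,x)` of its vertex operator map, together with the
vacuum, truncation, creation and Borcherds (Jacobi) identity axioms. -/
structure VertexAlgebra (V : Type*) [AddCommGroup V] [Module ℂ V] where
  coeff : V → ℤ → V →ₗ[ℂ] V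
  coeff_add : ∀ (u v : V) (n : ℤ), coeff (u + v) n = coeff u n + coeff v n
  coeff_smul : ∀ (c : ℂ) (u : V) (n : ℤ), coeff (c • u) n = c • coeff u n
  vac : V
  vac_coeff_neg_one : ∀ v : V, coeff vac (-1) v = v
  vac_coeff : ∀ n : ℤ, n ≠ -1 → coeff vac n = 0
  trunc : ∀ u v : V, ∃ N : ℤ, ∀ n ≥ N, coeff u n v = 0
  creation : ∀ (u : V) (n : ℤ), 0 ≤ n → coeff u n vac = 0
  create_neg_one : ∀ u : V, coeff u (-1) vac = u
  borcherds : ∀ (u v w : V) (p q r : ℤ),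
    (∑ᶠ i : ℕ, gb p i • coeff (coeff u (r + i) v) (p + q - i) w) =
    ∑ᶠ i : ℕ, ((-1 : ℂ) ^ i * gb r i) •
      (coeff u (p + r - i) (coeff v (q + i) w)
        - ((-1 : ℂ) ^ r) • coeff v (q + r - i) (coeff u (p + i) w))

/-- A module for a vertex algebra, presented through the coefficient operators
`Yw u n = u_n = Res_x x^n Y_W(u,x)`, with weak associativity (in coefficient form:
for every `a b : ℤ`, the coefficient of `x₀^a x₂^b` in
`(x₀+x₂)^l Y_W(u,x₀+x₂) Y_W(v,x₂) w` equals that in `(x₀+x₂)^l Y_W(Y(u,x₀)v,x₂) w`,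
where `(x₀+x₂)^n` is expanded in nonnegative powers of `x₂`) as the main axiom. -/
structure VAModule {V : Type*} [AddCommGroup V] [Module ℂ V] (A : VertexAlgebra V)
    (W : Type*) [AddCommGroup W] [Module ℂ W] where
  Yw : V → ℤ → W →ₗ[ℂ] W
  Yw_add : ∀ (u v : V) (n : ℤ), Yw (u + v) n = Yw u n + Yw v n
  Yw_smul : ∀ (c : ℂ) (u : V) (n : ℤ), Yw (c • u) n = c • Yw u n
  vac_neg_one : ∀ w : W, Yw A.vac (-1) w = w
  vac_ne : ∀ n : ℤ, n ≠ -1 → Yw A.vac n = 0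
  trunc : ∀ (u : V) (w : W), ∃ N : ℤ, ∀ n ≥ N, Yw u n w = 0
  weak_assoc : ∀ (u v : V) (w : W) (l : ℕ),
    (∀ n : ℤ, (l : ℤ) ≤ n → Yw u n w = 0) →
    ∀ a b : ℤ,
      (∑ᶠ j : ℕ, gb (a + j) j • Yw u ((l : ℤ) - 1 - a - j) (Yw v ((j : ℤ) - b - 1) w)) =
      ∑ j ∈ Finset.range (l + 1),
        gb l j • Yw (A.coeff u ((l : ℤ) - j - a - 1) v) ((j : ℤ) - b - 1) w

/-- A ℤ-graded vertex algebra: a vertex algebra with an internal direct sum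
decomposition `V = ⨁_{n∈ℤ} V_(n)` compatible with the vertex operator coefficients:
`u_n` maps `V_(k)` to `V_(k + m - n - 1)` for `u ∈ V_(m)`. -/
structure GradedVA (V : Type*) [AddCommGroup V] [Module ℂ V] extends VertexAlgebra V where
  gr : ℤ → Submodule ℂ V
  internal : DirectSum.IsInternal gr
  vac_mem : vac ∈ gr 0
  coeff_grade : ∀ {m : ℤ} {u : V}, u ∈ gr m → ∀ (n : ℤ) {k : ℤ} {v : V}, v ∈ gr k →
    coeff u n v ∈ gr (k + m - n - 1)

/-- An ℕ-graded vertex algebra: `V_(n) = 0` for `n < 0`. -/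
def GradedVA.IsNNGraded {V : Type*} [AddCommGroup V] [Module ℂ V] (A : GradedVA V) : Prop :=
  ∀ n : ℤ, n < 0 → A.gr n = ⊥

/-- The property that a family of coefficient operators `Yw u n = u_n` defines a weak
module structure over the vertex algebra `A` on `W`: linearity in `u`, lower
truncation, the vacuum property `Y_W(1,x) = id`, and the Borcherds (Jacobi) identity. -/
def IsWeakModule {V W : Type*} [AddCommGroup V] [Module ℂ V] [AddCommGroup W] [Module ℂ W]
    (A : VertexAlgebra V) (Yw : V → ℤ → W →ₗ[ℂ] W) : Prop :=
  (∀ (u v : V) (n : ℤ), Yw (u + v) n = Yw u n + Yw v n) ∧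
  (∀ (c : ℂ) (u : V) (n : ℤ), Yw (c • u) n = c • Yw u n) ∧
  (∀ (u : V) (w : W), ∃ N : ℤ, ∀ n ≥ N, Yw u n w = 0) ∧
  (∀ w : W, Yw A.vac (-1) w = w) ∧
  (∀ n : ℤ, n ≠ -1 → Yw A.vac n = 0) ∧
  (∀ (u v : V) (w : W) (p q r : ℤ),
    (∑ᶠ i : ℕ, gb p i • Yw (A.coeff u (r + i) v) (p + q - i) w) =
    ∑ᶠ i : ℕ, ((-1 : ℂ) ^ i * gb r i) •
      (Yw u (p + r - i) (Yw v (q + i) w)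
        - ((-1 : ℂ) ^ r) • Yw v (q + r - i) (Yw u (p + i) w)))

/-- An ℕ-grading on a weak module: an internal direct sum `W = ⨁ W_(n)` with
`W_(n) = 0` for `n < 0` and `u_n : W_(k) → W_(k + m - n - 1)` for `u ∈ V_(m)`. -/
def IsNNGradedModule {V W : Type*} [AddCommGroup V] [Module ℂ V] [AddCommGroup W]
    [Module ℂ W] (A : GradedVA V) (Yw : V → ℤ → W →ₗ[ℂ] W)
    (wgr : ℤ → Submodule ℂ W) : Prop :=
  DirectSum.IsInternal wgr ∧ (∀ n : ℤ, n < 0 → wgr n = ⊥) ∧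
  (∀ {m : ℤ} {u : V}, u ∈ A.gr m → ∀ (n : ℤ) {k : ℤ} {w : W}, w ∈ wgr k →
    Yw u n w ∈ wgr (k + m - n - 1))

theorem gb_eq (a : ℤ) (i : ℕ) : gb a i = ((Ring.choose a i : ℤ) : ℂ) := by
  have h := Ring.descPochhammer_eq_factorial_smul_choose a i
  have h2 : (∏ j ∈ Finset.range i, ((a : ℂ) - (j : ℂ))) = (Nat.factorial i : ℂ) * ((Ring.choose a i : ℤ) : ℂ) := by
    have h3 : (descPochhammer ℤ i).smeval a = ∏ j ∈ Finset.range i, (a - (j : ℤ)) := by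
      rw [← Polynomial.eval_eq_smeval, descPochhammer_eval_eq_prod_range]
    rw [h3] at h
    have := congrArg (fun z : ℤ => (z : ℂ)) h
    simpa using this
  rw [gb, h2]
  field_simp [Nat.factorial_ne_zero]

theorem gb_zero_right (a : ℤ) : gb a 0 = 1 := by simp [gb]

theorem gb_pascal (a : ℤ) (i : ℕ) : gb (a + 1) (i + 1) = gb a (i + 1) + gb a i := by
  rw [gb_eq, gb_eq, gb_eq, Ring.choose_succ_succ]; push_cast; ring

theorem gb_nat (l j : ℕ) : gb l j = (l.choose j : ℂ) := by
  rw [gb_eq, Ring.choose_natCast]; simp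

theorem gb_vand (q s : ℤ) (n : ℕ) :
    ∑ i ∈ Finset.range (n + 1), ((-1 : ℂ) ^ i * gb q i * gb (s - i) (n - i)) = gb (s - q) n := by
  have h1 : ∀ i ∈ Finset.range (n + 1), ((-1 : ℂ) ^ i * gb q i * gb (s - i) (n - i))
      = (-1) ^ n * (((Ring.choose q i * Ring.choose (n - s - 1) (n - i) : ℤ)) : ℂ) := by
    intro i hi
    have hi' : i ≤ n := by simpa [Nat.lt_succ_iff] using hi
    have h := Ring.choose_neg (-(s - i)) (n - i)
    have e : (-(s - (i : ℤ)) + ((n - i : ℕ) : ℤ) - 1) = n - s - 1 := by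
      push_cast [Nat.cast_sub hi']; ring
    rw [neg_neg, e] at h
    rw [gb_eq, gb_eq, h]
    have e2 : (-1 : ℂ) ^ n = (-1) ^ i * (-1) ^ (n - i) := by
      rw [← pow_add]; congr 1; omega
    rw [e2]
    simp [Units.smul_def, Int.negOnePow_def]
    ring
  rw [Finset.sum_congr rfl h1, ← Finset.mul_sum, ← Int.cast_sum]
  have h2 := Ring.add_choose_eq n (Commute.all q (n - s - 1))
  rw [Finset.Nat.sum_antidiagonal_eq_sum_range_succ_mk] at h2
  have h3 := Ring.choose_neg (-(s - q)) n
  rw [neg_neg] at h3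
  have e : -(s - q) + (n : ℤ) - 1 = q + (n - s - 1) := by ring
  rw [e] at h3
  rw [← h2, gb_eq, h3]
  simp [Units.smul_def, Int.negOnePow_def]

theorem gb_zero_left (n : ℕ) : gb 0 n = if n = 0 then 1 else 0 := by
  have := gb_nat 0 n
  rw [Nat.cast_zero] at this
  rw [this]
  rcases n with _ | n <;> simp

/-- Eventually vanishing sequences. -/
def EvZ {W : Type*} [AddCommGroup W] (f : ℕ → W) : Prop := ∃ N : ℕ, ∀ i, N ≤ i → f i = 0

/-- The binomial sum of a sequence. -/
noncomputable def bsum {W : Type*} [AddCommGroup W] [Module ℂ W] (r : ℤ) (f : ℕ → W) : W :=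
  ∑ᶠ i : ℕ, gb r i • f i

theorem fs_eq {W : Type*} [AddCommGroup W] (f : ℕ → W) (N : ℕ) (h : ∀ i, N ≤ i → f i = 0) :
    ∑ᶠ i, f i = ∑ i ∈ Finset.range N, f i := by
  apply finsum_eq_sum_of_support_subset
  intro i hi
  simp only [Finset.coe_range, Set.mem_Iio]
  by_contra hc
  exact hi (h i (not_lt.mp hc))

theorem bsum_eq {W : Type*} [AddCommGroup W] [Module ℂ W] (r : ℤ) (f : ℕ → W) (N : ℕ)
    (h : ∀ i, N ≤ i → f i = 0) : bsum r f = ∑ i ∈ Finset.range N, gb r i • f i :=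
  fs_eq _ N (fun i hi => by rw [h i hi, smul_zero])

theorem bsum_zero_left {W : Type*} [AddCommGroup W] [Module ℂ W] (f : ℕ → W) :
    bsum 0 f = f 0 := by
  unfold bsum
  rw [fs_eq _ 1]
  · simp [gb_zero_right]
  · intro i hi
    rw [gb_zero_left, if_neg (by omega), zero_smul]

theorem bsum_congr {W : Type*} [AddCommGroup W] [Module ℂ W] (r : ℤ) {f g : ℕ → W}
    (h : ∀ i, f i = g i) : bsum r f = bsum r g := by
  rw [funext h]

theorem bsum_of_zero {W : Type*} [AddCommGroup W] [Module ℂ W] (r : ℤ) {f : ℕ → W}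
    (h : ∀ i, f i = 0) : bsum r f = 0 := by
  rw [bsum_eq r f 0 (fun i _ => h i)]; simp

theorem bsum_add {W : Type*} [AddCommGroup W] [Module ℂ W] (r : ℤ) {f g : ℕ → W}
    (hf : EvZ f) (hg : EvZ g) : bsum r (fun i => f i + g i) = bsum r f + bsum r g := by
  obtain ⟨N, hN⟩ := hf
  obtain ⟨M, hM⟩ := hg
  rw [bsum_eq r f (max N M) (fun i hi => hN i (le_trans (le_max_left _ _) hi)),
    bsum_eq r g (max N M) (fun i hi => hM i (le_trans (le_max_right _ _) hi)),
    bsum_eq r _ (max N M) (fun i hi => by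
      rw [hN i (le_trans (le_max_left _ _) hi), hM i (le_trans (le_max_right _ _) hi), add_zero]),
    ← Finset.sum_add_distrib]
  simp only [smul_add]

theorem bsum_smul {W : Type*} [AddCommGroup W] [Module ℂ W] (r : ℤ) (c : ℂ) {f : ℕ → W}
    (hf : EvZ f) : bsum r (fun i => c • f i) = c • bsum r f := by
  obtain ⟨N, hN⟩ := hf
  rw [bsum_eq r f N hN, bsum_eq r _ N (fun i hi => by rw [hN i hi, smul_zero]), Finset.smul_sum]
  exact Finset.sum_congr rfl (fun i _ => smul_comm _ _ _)

theorem bsum_pascal {W : Type*} [AddCommGroup W] [Module ℂ W] (r : ℤ) {f : ℕ → W}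
    (hf : EvZ f) : bsum (r + 1) f = bsum r f + bsum r (fun i => f (i + 1)) := by
  obtain ⟨N, hN⟩ := hf
  rw [bsum_eq (r + 1) f (N + 1) (fun i hi => hN i (by omega)),
    bsum_eq r f (N + 1) (fun i hi => hN i (by omega)),
    bsum_eq r (fun i => f (i + 1)) N (fun i hi => hN _ (by omega)),
    Finset.sum_range_succ', Finset.sum_range_succ' (fun i => gb r i • f i)]
  simp only [gb_pascal, add_smul, Finset.sum_add_distrib, gb_zero_right]
  abel

section core

variable {V W : Type*} [AddCommGroup V] [Module ℂ V] [AddCommGroup W] [Module ℂ W]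

/-- Iterate side. -/
noncomputable def Lf (A : VertexAlgebra V) (Yw : V → ℤ → W →ₗ[ℂ] W) (u v : V) (w : W)
    (p q r : ℤ) : W :=
  bsum p (fun i => Yw (A.coeff u (r + i) v) (p + q - i) w)

/-- Product side. -/
noncomputable def Pf (Yw : V → ℤ → W →ₗ[ℂ] W) (u v : V) (w : W) (p q r : ℤ) : W :=
  bsum r (fun i => ((-1 : ℂ) ^ i) • Yw u (p + r - i) (Yw v (q + i) w))

/-- Borcherds defect. -/
noncomputable def Jf (A : VertexAlgebra V) (Yw : V → ℤ → W →ₗ[ℂ] W) (u v : V) (w : W)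
    (p q r : ℤ) : W :=
  Lf A Yw u v w p q r - (Pf Yw u v w p q r - ((-1 : ℂ) ^ r) • Pf Yw v u w q p r)

/-- Linear data with truncation. -/
structure Good (Yw : V → ℤ → W →ₗ[ℂ] W) : Prop where
  add : ∀ (u v : V) (n : ℤ), Yw (u + v) n = Yw u n + Yw v n
  smul : ∀ (c : ℂ) (u : V) (n : ℤ), Yw (c • u) n = c • Yw u n
  trunc : ∀ (u : V) (w : W), ∃ N : ℤ, ∀ n ≥ N, Yw u n w = 0

theorem Good.zero {Yw : V → ℤ → W →ₗ[ℂ] W} (g : Good Yw) (n : ℤ) : Yw 0 n = 0 := by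
  have := g.smul 0 0 n
  simpa using this

theorem Good.sum {Yw : V → ℤ → W →ₗ[ℂ] W} (g : Good Yw) (n : ℤ) (s : Finset ℕ) (f : ℕ → V)
    (w : W) : Yw (∑ i ∈ s, f i) n w = ∑ i ∈ s, Yw (f i) n w := by
  classical
  induction s using Finset.induction_on with
  | empty => simp [g.zero]
  | insert a s ha ih => rw [Finset.sum_insert ha, Finset.sum_insert ha, g.add, ← ih]; rfl

theorem evL (A : VertexAlgebra V) {Yw : V → ℤ → W →ₗ[ℂ] W} (g : Good Yw) (u v : V) (w : W)
    (r : ℤ) (m : ℕ → ℤ) : EvZ (fun i : ℕ => Yw (A.coeff u (r + i) v) (m i) w) := by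
  obtain ⟨N, hN⟩ := A.trunc u v
  refine ⟨(N - r).toNat, fun i hi => ?_⟩
  simp only
  rw [hN _ (by omega), g.zero]; rfl

theorem evP {Yw : V → ℤ → W →ₗ[ℂ] W} (g : Good Yw) (u v : V) (w : W)
    (q : ℤ) (m : ℕ → ℤ) :
    EvZ (fun i : ℕ => ((-1 : ℂ) ^ i) • Yw u (m i) (Yw v (q + i) w)) := by
  obtain ⟨N, hN⟩ := g.trunc v w
  refine ⟨(N - q).toNat, fun i hi => ?_⟩
  simp only
  rw [hN _ (by omega)]; simp

theorem Lf_rec (A : VertexAlgebra V) {Yw : V → ℤ → W →ₗ[ℂ] W} (g : Good Yw) (u v : V) (w : W)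
    (p q r : ℤ) : Lf A Yw u v w (p + 1) q r = Lf A Yw u v w p (q + 1) r + Lf A Yw u v w p q (r + 1) := by
  unfold Lf
  rw [bsum_pascal _ (evL A g u v w r _)]
  congr 1
  · apply bsum_congr; intro i; congr 2; ring
  · apply bsum_congr; intro i
    have e1 : r + ((i + 1 : ℕ) : ℤ) = r + 1 + i := by push_cast; ring
    have e2 : p + 1 + q - ((i + 1 : ℕ) : ℤ) = p + q - i := by push_cast; ring
    rw [e1, e2]

theorem Pf_rec {Yw : V → ℤ → W →ₗ[ℂ] W} (g : Good Yw) (u v : V) (w : W)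
    (p q r : ℤ) : Pf Yw u v w p q (r + 1) = Pf Yw u v w (p + 1) q r - Pf Yw u v w p (q + 1) r := by
  unfold Pf
  rw [bsum_pascal _ (evP g u v w q _), sub_eq_add_neg]
  congr 1
  · apply bsum_congr; intro i; congr 2; congr 1; ring
  · rw [← neg_one_smul ℂ (bsum _ _), ← bsum_smul _ _ (evP g u v w _ _)]
    apply bsum_congr; intro i
    have e1 : q + ((i + 1 : ℕ) : ℤ) = q + 1 + i := by push_cast; ring
    have e2 : p + (r + 1) - ((i + 1 : ℕ) : ℤ) = p + r - i := by push_cast; ring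
    rw [e1, e2, smul_smul, pow_succ, mul_comm]

theorem Jf_rec (A : VertexAlgebra V) {Yw : V → ℤ → W →ₗ[ℂ] W} (g : Good Yw) (u v : V) (w : W)
    (p q r : ℤ) : Jf A Yw u v w (p + 1) q r = Jf A Yw u v w p (q + 1) r + Jf A Yw u v w p q (r + 1) := by
  unfold Jf
  rw [Lf_rec A g, Pf_rec g u v w p q r, Pf_rec g v u w q p r, zpow_add_one₀ (by norm_num)]
  module

/-- Jf vanishes for p large. -/
def PVan (A : VertexAlgebra V) (Yw : V → ℤ → W →ₗ[ℂ] W) (u v : V) (w : W) : Prop :=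
  ∃ l : ℤ, ∀ p q r : ℤ, l ≤ p → Jf A Yw u v w p q r = 0

theorem PVan_of (A : VertexAlgebra V) {Yw : V → ℤ → W →ₗ[ℂ] W} (g : Good Yw) (u v : V) (w : W)
    (l : ℤ) (h : ∀ q r : ℤ, Jf A Yw u v w l q r = 0) : PVan A Yw u v w := by
  refine ⟨l, fun p q r hp => ?_⟩
  induction p, hp using Int.leInduction generalizing q r with
  | base => exact h q r
  | succ p hp ih => rw [Jf_rec A g, ih, ih, add_zero]

theorem Jf_add (A : VertexAlgebra V) {Yw : V → ℤ → W →ₗ[ℂ] W} (g : Good Yw) (u u' v : V) (w : W)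
    (p q r : ℤ) : Jf A Yw (u + u') v w p q r = Jf A Yw u v w p q r + Jf A Yw u' v w p q r := by
  have h1 : Lf A Yw (u + u') v w p q r = Lf A Yw u v w p q r + Lf A Yw u' v w p q r := by
    unfold Lf
    rw [← bsum_add _ (evL A g u v w r _) (evL A g u' v w r _)]
    apply bsum_congr; intro i
    simp [A.coeff_add, g.add]
  have h2 : Pf Yw (u + u') v w p q r = Pf Yw u v w p q r + Pf Yw u' v w p q r := by
    unfold Pf
    rw [← bsum_add _ (evP g u v w _ _) (evP g u' v w _ _)]
    apply bsum_congr; intro i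
    simp [g.add]
  have h3 : Pf Yw v (u + u') w q p r = Pf Yw v u w q p r + Pf Yw v u' w q p r := by
    unfold Pf
    rw [← bsum_add _ (evP g v u w _ _) (evP g v u' w _ _)]
    apply bsum_congr; intro i
    simp [g.add]
  unfold Jf
  rw [h1, h2, h3]
  module

/-- Associativity hypothesis with nonnegative `l` gives vanishing for large `p`. -/
theorem PVan_of_assoc (A : VertexAlgebra V) {Yw : V → ℤ → W →ₗ[ℂ] W} (g : Good Yw) (u v : V)
    (w : W) (k : ℤ) (l : ℕ)
    (hv : ∀ n : ℤ, k ≤ n → Yw v n w = 0) (hu : ∀ n : ℤ, (l : ℤ) ≤ n → Yw u n w = 0)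
    (hit : ∀ p q : ℤ, q < k →
        Yw u p (Yw v q w) =
          ∑ i ∈ Finset.range (k - q).toNat, ∑ j ∈ Finset.range (l + 1),
            (gb (p - l) i * gb l j) •
              Yw (A.coeff u (p - l - i + j) v) (q + l + i - j) w)
    (hres : ∀ p q i : ℤ, k - q ≤ i →
        ∑ j ∈ Finset.range (l + 1),
          gb l j • Yw (A.coeff u (p - i - j) v) (q + i + j) w = 0) : PVan A Yw u v w := by
  apply PVan_of A g u v w l
  intro q r
  have hL : ∀ a b : ℤ, Lf A Yw u v w l b a =
      ∑ j ∈ Finset.range (l + 1), gb l j • Yw (A.coeff u (a + j) v) (l + b - j) w := by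
    intro a b
    unfold Lf bsum
    apply fs_eq
    intro i hi
    rw [gb_nat, Nat.choose_eq_zero_of_lt (by omega)]; simp
  have hL0 : ∀ a b : ℤ, k ≤ b → Lf A Yw u v w l b a = 0 := by
    intro a b hb
    rw [hL, ← Finset.sum_range_reflect, ← hres (a + l) b 0 (by omega)]
    apply Finset.sum_congr rfl
    intro j hj
    have hj' : j ≤ l := by simpa [Nat.lt_succ_iff] using hj
    have e0 : l + 1 - 1 - j = l - j := by omega
    rw [e0, gb_nat, gb_nat, Nat.choose_symm hj']
    push_cast [Nat.cast_sub hj']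
    congr 3
    · congr 2; ring
    · ring
  have hit' : ∀ p q : ℤ, Yw u p (Yw v q w) =
      ∑ i ∈ Finset.range (k - q).toNat, gb (p - l) i • Lf A Yw u v w l (q + i) (p - l - i) := by
    intro p q
    by_cases hq : q < k
    · rw [hit p q hq]
      apply Finset.sum_congr rfl
      intro i _
      rw [hL, Finset.smul_sum]
      apply Finset.sum_congr rfl
      intro j _
      rw [smul_smul]
      congr 3; ring
    · have : (k - q).toNat = 0 := by omega
      rw [hv q (by omega), this]; simp
  have hP2 : Pf Yw v u w q l r = 0 := by
    apply bsum_of_zero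
    intro i
    rw [hu _ (by omega)]; simp
  have hP : Pf Yw u v w l q r = Lf A Yw u v w l q r := by
    unfold Pf
    rw [bsum_eq _ _ (k - q).toNat (fun i hi => by rw [hv _ (by omega)]; simp)]
    have h1 : ∀ i ∈ Finset.range (k - q).toNat,
        gb r i • ((-1 : ℂ) ^ i) • Yw u (l + r - i) (Yw v (q + i) w) =
        ∑ m ∈ Finset.range ((k - q).toNat - i), ((-1 : ℂ) ^ i * gb r i * gb (r - i) m) •
          Lf A Yw u v w l (q + (i + m : ℕ)) (r - (i + m : ℕ)) := by
      intro i hi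
      have e : (k - (q + (i : ℤ))).toNat = (k - q).toNat - i := by omega
      rw [hit', e, Finset.smul_sum, Finset.smul_sum]
      apply Finset.sum_congr rfl
      intro m _
      rw [smul_smul, smul_smul]
      have e1 : (l : ℤ) + r - i - l = r - i := by ring
      have e2 : q + (i : ℤ) + m = q + (i + m : ℕ) := by push_cast; ring
      have e3 : r - (i : ℤ) - m = r - (i + m : ℕ) := by push_cast; ring
      rw [e1, e2, e3]
      congr 1; ring
    rw [Finset.sum_congr rfl h1, ← Finset.sum_range_diag_flip _ (fun i m =>
      ((-1 : ℂ) ^ i * gb r i * gb (r - i) m) •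
          Lf A Yw u v w l (q + (i + m : ℕ)) (r - (i + m : ℕ)))]
    have h2 : ∀ n ∈ Finset.range (k - q).toNat,
        ∑ i ∈ Finset.range (n + 1), ((-1 : ℂ) ^ i * gb r i * gb (r - i) (n - i)) •
          Lf A Yw u v w l (q + (i + (n - i) : ℕ)) (r - (i + (n - i) : ℕ)) =
        (if n = 0 then (1 : ℂ) else 0) • Lf A Yw u v w l (q + n) (r - n) := by
      intro n _
      rw [← gb_zero_left, ← sub_self r, ← gb_vand r r n, Finset.sum_smul]
      apply Finset.sum_congr rfl
      intro i hi
      have hi' : i ≤ n := by simpa [Nat.lt_succ_iff] using hi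
      rw [Nat.add_sub_cancel' hi']
    rw [Finset.sum_congr rfl h2]
    by_cases hq : q < k
    · rw [Finset.sum_eq_single 0]
      · simp
      · intro n _ hn; simp [hn]
      · intro hn; simp at hn; omega
    · have : (k - q).toNat = 0 := by omega
      rw [this, hL0 r q (by omega)]; simp
  unfold Jf
  rw [hP2, hP]; simp

/-- The case `v = vac`. -/
theorem Jf_vac (A : VertexAlgebra V) {Yw : V → ℤ → W →ₗ[ℂ] W} (g : Good Yw)
    (hvac1 : ∀ w : W, Yw A.vac (-1) w = w) (hvac2 : ∀ n : ℤ, n ≠ -1 → Yw A.vac n = 0)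
    (u : V) (w : W) (hp : PVan A Yw u A.vac w) (p q r : ℤ) : Jf A Yw u A.vac w p q r = 0 := by
  have h0 : ∀ (r : ℕ) (p q : ℤ), Jf A Yw u A.vac w p q r = 0 := by
    intro r
    induction r with
    | zero =>
      intro p q
      have hl : Lf A Yw u A.vac w p q 0 = 0 := by
        apply bsum_of_zero
        intro i
        rw [A.creation u _ (by omega), g.zero]; rfl
      unfold Jf
      rw [Nat.cast_zero, hl]
      unfold Pf
      rw [bsum_zero_left, bsum_zero_left]
      by_cases hq : q = -1
      · subst hq; simp [hvac1]
      · simp [hvac2 q hq]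
    | succ r ih =>
      intro p q
      have := Jf_rec A g u A.vac w p q r
      rw [ih, ih, zero_add] at this
      push_cast
      exact this.symm
  obtain ⟨l, hl⟩ := hp
  have h1 : ∀ (n : ℕ) (p q r : ℤ), -(n : ℤ) ≤ r → Jf A Yw u A.vac w p q r = 0 := by
    intro n
    induction n with
    | zero =>
      intro p q r hr
      obtain ⟨m, rfl⟩ := Int.eq_ofNat_of_zero_le (a := r) (by simpa using hr)
      exact h0 m p q
    | succ n ih =>
      intro p q r hr
      have h2 : ∀ (m : ℕ) (p q : ℤ), l - m ≤ p → Jf A Yw u A.vac w p q r = 0 := by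
        intro m
        induction m with
        | zero => intro p q hp; exact hl p q r (by simpa using hp)
        | succ m ihm =>
          intro p q hp
          have := Jf_rec A g u A.vac w p (q - 1) r
          rw [ihm _ _ (by push_cast at hp; linarith), ih p (q - 1) (r + 1) (by push_cast at hr; linarith),
            add_zero, sub_add_cancel] at this
          exact this.symm
      exact h2 (l - p).toNat p q (by omega)
  exact h1 (-r).toNat p q r (by omega)

/-- Derivative property. -/
theorem deriv_vac (A : VertexAlgebra V) {Yw : V → ℤ → W →ₗ[ℂ] W} (g : Good Yw)
    (hvac1 : ∀ w : W, Yw A.vac (-1) w = w) (hvac2 : ∀ n : ℤ, n ≠ -1 → Yw A.vac n = 0)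
    (u : V) (w : W) (hp : PVan A Yw u A.vac w) (j : ℕ) : ∀ m : ℤ,
    Yw (A.coeff u (-1 - j) A.vac) m w = ((-1 : ℂ) ^ j * gb m j) • Yw u (m - j) w := by
  induction j using Nat.strong_induction_on with
  | _ j ih =>
  intro m
  rcases Nat.eq_zero_or_pos j with hj | hj
  · subst hj
    simp [A.create_neg_one, gb_zero_right]
  have hJ := Jf_vac A g hvac1 hvac2 u w hp m 0 (-1 - j)
  have hP1 : Pf Yw u A.vac w m 0 (-1 - j) = 0 := by
    apply bsum_of_zero
    intro i
    rw [hvac2 _ (by omega)]; simp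
  have hP2 : Pf Yw A.vac u w 0 m (-1 - j) = 0 := by
    apply bsum_of_zero
    intro i
    rw [hvac2 _ (by omega)]; simp
  unfold Jf at hJ
  rw [hP1, hP2, smul_zero, sub_zero, sub_zero] at hJ
  unfold Lf at hJ
  rw [bsum_eq _ _ (j + 1) (fun i hi => by
    rw [A.creation u _ (by omega), g.zero]; rfl), Finset.sum_range_succ'] at hJ
  have hV := gb_vand m m j
  rw [sub_self, gb_zero_left, if_neg (by omega), Finset.sum_range_succ'] at hV
  have hS : ∑ i ∈ Finset.range j, gb m (i + 1) •
      Yw (A.coeff u (-1 - (j : ℤ) + ((i + 1 : ℕ) : ℤ)) A.vac) (m + 0 - ((i + 1 : ℕ) : ℤ)) w =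
      ((-1 : ℂ) ^ j * ∑ i ∈ Finset.range j,
        ((-1 : ℂ) ^ (i + 1) * gb m (i + 1) * gb (m - ((i + 1 : ℕ) : ℤ)) (j - (i + 1)))) • Yw u (m - j) w := by
    rw [Finset.mul_sum, Finset.sum_smul]
    apply Finset.sum_congr rfl
    intro i hi
    have hi' : i + 1 ≤ j := by simpa using hi
    have e : -1 - (j : ℤ) + ((i + 1 : ℕ) : ℤ) = -1 - ((j - (i + 1) : ℕ) : ℤ) := by
      push_cast [Nat.cast_sub hi']; ring
    have e2 : m - ((i + 1 : ℕ) : ℤ) - ((j - (i + 1) : ℕ) : ℤ) = m - j := by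
      push_cast [Nat.cast_sub hi']; ring
    rw [e, add_zero, ih (j - (i + 1)) (by omega), smul_smul, e2]
    congr 1
    have e3 : (-1 : ℂ) ^ j = (-1) ^ (i + 1) * (-1) ^ (j - (i + 1)) := by
      rw [← pow_add]; congr 1; omega
    have e4 : (-1 : ℂ) ^ (i + 1) * (-1) ^ (i + 1) = 1 := by
      rw [← mul_pow]; simp
    rw [e3]
    linear_combination (-gb m (i + 1) * (-1) ^ (j - (i + 1)) * gb (m - ((i + 1 : ℕ) : ℤ)) (j - (i + 1))) * e4
  rw [hS] at hJ
  have hV' := eq_neg_of_add_eq_zero_left hV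
  rw [hV'] at hJ
  simp only [Nat.cast_zero, add_zero, sub_zero, gb_zero_right, one_smul, pow_zero, one_mul,
    Nat.sub_zero] at hJ
  rw [eq_neg_of_add_eq_zero_right hJ, mul_neg, neg_smul, neg_neg]

/-- Skew symmetry in `V`. -/
theorem skew (A : VertexAlgebra V) (u v : V) (r : ℤ) (N : ℕ)
    (hN : ∀ i : ℕ, N ≤ i → A.coeff u (r + i) v = 0) :
    A.coeff v r u = ∑ i ∈ Finset.range N,
      (-((-1 : ℂ) ^ r) * (-1) ^ i) • A.coeff (A.coeff u (r + i) v) (-1 - i) A.vac := by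
  have h := A.borcherds u v A.vac (-1) 0 r
  have hz : ∀ n : ℤ, A.coeff (0 : V) n = 0 := fun n => by
    have := A.coeff_smul 0 0 n
    simpa using this
  rw [fs_eq _ N (fun i hi => by rw [hN i hi, hz]; simp), fs_eq _ 1 (fun i hi => by
    rw [A.creation v _ (by omega), A.creation u _ (by omega)]; simp)] at h
  have hgb : ∀ i : ℕ, gb (-1) i = (-1) ^ i := by
    intro i
    induction i with
    | zero => simp [gb_zero_right]
    | succ i ih =>
      have := gb_pascal (-1) i
      rw [show (-1 : ℤ) + 1 = 0 from rfl, gb_zero_left, if_neg (by omega), ih] at this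
      rw [pow_succ]; linear_combination -this
  simp only [Finset.sum_range_one, hgb, gb_zero_right, A.creation v 0 le_rfl, Nat.cast_zero,
    add_zero, A.create_neg_one, sub_zero, map_zero, zero_sub, zero_add, pow_zero, one_mul,
    one_smul] at h
  have hs : ((-1 : ℂ) ^ r) * (-1) ^ r = 1 := by rw [← mul_zpow]; simp
  simp only [mul_smul]
  rw [← Finset.smul_sum, h, smul_neg, neg_smul, neg_neg, smul_smul, hs, one_smul]

theorem Lf_skew (A : VertexAlgebra V) {Yw : V → ℤ → W →ₗ[ℂ] W} (g : Good Yw)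
    (hvac1 : ∀ w : W, Yw A.vac (-1) w = w) (hvac2 : ∀ n : ℤ, n ≠ -1 → Yw A.vac n = 0)
    (hp : ∀ u v w, PVan A Yw u v w) (u v : V) (w : W) (p q r : ℤ) :
    Lf A Yw u v w p q r = -((-1 : ℂ) ^ r • Lf A Yw v u w q p r) := by
  have hbase : ∀ p r : ℤ, Lf A Yw u v w p 0 r = -((-1 : ℂ) ^ r • Lf A Yw v u w 0 p r) := by
    intro p r
    obtain ⟨N, hN⟩ := A.trunc u v
    have hN' : ∀ i : ℕ, (N - r).toNat ≤ i → A.coeff u (r + i) v = 0 :=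
      fun i hi => hN _ (by omega)
    unfold Lf
    rw [bsum_zero_left, bsum_eq _ _ (N - r).toNat (fun i hi => by rw [hN' i hi, g.zero]; rfl)]
    simp only [Nat.cast_zero, add_zero, zero_add, sub_zero]
    rw [skew A u v r _ hN', g.sum, Finset.smul_sum, ← Finset.sum_neg_distrib]
    apply Finset.sum_congr rfl
    intro i _
    rw [g.smul, LinearMap.smul_apply, deriv_vac A g hvac1 hvac2 _ w (hp _ _ _), smul_smul, smul_smul, ← neg_smul]
    congr 1
    have hs : ((-1 : ℂ) ^ r) * (-1) ^ r = 1 := by rw [← mul_zpow]; simp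
    have e4 : (-1 : ℂ) ^ i * (-1) ^ i = 1 := by
      rw [← mul_pow]; simp
    linear_combination (-gb p i) * hs - gb p i * ((-1 : ℂ) ^ r) * ((-1 : ℂ) ^ r) * e4
  set K : ℤ → ℤ → ℤ → W := fun p q r =>
    Lf A Yw u v w p q r + ((-1 : ℂ) ^ r • Lf A Yw v u w q p r) with hK
  have hrec : ∀ p q r, K (p + 1) q r = K p (q + 1) r + K p q (r + 1) := by
    intro p q r
    simp only [hK]
    rw [Lf_rec A g u v w p q r, Lf_rec A g v u w q p r, zpow_add_one₀ (by norm_num)]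
    module
  obtain ⟨N1, hN1⟩ := A.trunc u v
  obtain ⟨N2, hN2⟩ := A.trunc v u
  have hn : ∀ (n : ℕ) (r : ℤ), max N1 N2 - n ≤ r → ∀ p q, K p q r = 0 := by
    intro n
    induction n with
    | zero =>
      intro r hr p q
      have h1 : N1 ≤ r := le_trans (le_max_left _ _) (by simpa using hr)
      have h2 : N2 ≤ r := le_trans (le_max_right _ _) (by simpa using hr)
      have e1 : Lf A Yw u v w p q r = 0 := by
        apply bsum_of_zero
        intro i
        rw [hN1 _ (by omega), g.zero]; rfl
      have e2 : Lf A Yw v u w q p r = 0 := by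
        apply bsum_of_zero
        intro i
        rw [hN2 _ (by omega), g.zero]; rfl
      simp only [hK, e1, e2, smul_zero, add_zero]
    | succ n ih =>
      intro r hr
      have hsh : ∀ p q, K (p + 1) q r = K p (q + 1) r := by
        intro p q
        rw [hrec, ih (r + 1) (by push_cast at hr; linarith), add_zero]
      have h0 : ∀ p, K p 0 r = 0 := by
        intro p
        simp only [hK]
        rw [hbase, neg_add_cancel]
      intro p q
      induction q using Int.induction_on generalizing p with
      | zero => exact h0 p
      | succ q ihq => rw [← hsh]; exact ihq _
      | pred q ihq =>
        have := hsh (p - 1) (-(q : ℤ) - 1)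
        rw [sub_add_cancel, sub_add_cancel] at this
        rw [this]; exact ihq _
  exact eq_neg_of_add_eq_zero_left (hn (max N1 N2 - r).toNat r (by omega) p q)

theorem Jf_zero (A : VertexAlgebra V) {Yw : V → ℤ → W →ₗ[ℂ] W} (g : Good Yw)
    (hvac1 : ∀ w : W, Yw A.vac (-1) w = w) (hvac2 : ∀ n : ℤ, n ≠ -1 → Yw A.vac n = 0)
    (hp : ∀ u v w, PVan A Yw u v w) (u v : V) (w : W) (p q r : ℤ) :
    Jf A Yw u v w p q r = 0 := by
  obtain ⟨l, hl⟩ := hp u v w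
  obtain ⟨k, hk⟩ := hp v u w
  have hs : ((-1 : ℂ) ^ r) * (-1) ^ r = 1 := by rw [← mul_zpow]; simp
  have hq : ∀ p q r : ℤ, k ≤ q → Jf A Yw u v w p q r = 0 := by
    intro p q r hq
    have hs : ((-1 : ℂ) ^ r) * (-1) ^ r = 1 := by rw [← mul_zpow]; simp
    have : Jf A Yw u v w p q r = -((-1 : ℂ) ^ r • Jf A Yw v u w q p r) := by
      unfold Jf
      rw [Lf_skew A g hvac1 hvac2 hp u v w p q r, smul_sub, smul_sub, smul_smul, hs]
      module
    rw [this, hk q p r hq, smul_zero, neg_zero]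
  have h : ∀ (n : ℕ) (p q r : ℤ), l + k - n ≤ p + q → Jf A Yw u v w p q r = 0 := by
    intro n
    induction n with
    | zero =>
      intro p q r h
      by_cases h1 : l ≤ p
      · exact hl p q r h1
      · exact hq p q r (by push_cast at h; omega)
    | succ n ih =>
      intro p q r h
      have := Jf_rec A g u v w p q (r - 1)
      rw [ih (p + 1) q _ (by push_cast at h; omega), ih p (q + 1) _ (by push_cast at h; omega),
        zero_add, sub_add_cancel] at this
      exact this.symm
  exact h (l + k - (p + q)).toNat p q r (by omega)

theorem borcherds_of_Jf (A : VertexAlgebra V) {Yw : V → ℤ → W →ₗ[ℂ] W} (g : Good Yw)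
    (u v : V) (w : W) (p q r : ℤ) (h : Jf A Yw u v w p q r = 0) :
    (∑ᶠ i : ℕ, gb p i • Yw (A.coeff u (r + i) v) (p + q - i) w) =
    ∑ᶠ i : ℕ, ((-1 : ℂ) ^ i * gb r i) •
      (Yw u (p + r - i) (Yw v (q + i) w)
        - ((-1 : ℂ) ^ r) • Yw v (q + r - i) (Yw u (p + i) w)) := by
  have h1 := sub_eq_zero.mp h
  unfold Lf at h1
  unfold bsum at h1
  rw [h1, sub_eq_add_neg, ← neg_smul]
  unfold Pf
  have e2 : EvZ (fun i : ℕ => (-((-1 : ℂ) ^ r)) • (((-1 : ℂ) ^ i) • Yw v (q + r - i) (Yw u (p + i) w))) := by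
    obtain ⟨N, hN⟩ := evP g v u w p (fun i => q + r - i)
    exact ⟨N, fun i hi => by simp only at hN ⊢; rw [hN i hi, smul_zero]⟩
  rw [← bsum_smul _ _ (evP g v u w _ _), ← bsum_add _ (evP g u v w _ _) e2]
  unfold bsum
  congr 1
  funext i
  module

end core

/-- Theorem 3.2: let `V` be a ℤ-graded vertex algebra, `W = ⨁_{n∈ℕ} W_(n)`
an ℕ-graded vector space, and `Yw` the coefficients of a linear map `V ⊗ W → W((x))`
such that `u_n : W_(k) → W_(k+m-n-1)` for `u ∈ V_(m)` and `Y_W(1,x) = id_W`.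
If for all `u, v, w` there exist `k, l` with the truncation properties such that the
iterate formula (for `q < k`) and the residue vanishing (for `i ≥ k - q`) hold, then
`(W, Y_W)` is an ℕ-gradable weak `V`-module; in particular `Y_W` satisfies the
(Borcherds–)Jacobi identity. -/
theorem statement5 {V W : Type*} [AddCommGroup V] [Module ℂ V]
    [AddCommGroup W] [Module ℂ W] (A : GradedVA V)
    (Yw : V → ℤ → W →ₗ[ℂ] W) (wgr : ℤ → Submodule ℂ W)
    (hinternal : DirectSum.IsInternal wgr)
    (hnonneg : ∀ n : ℤ, n < 0 → wgr n = ⊥)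
    (hgrade : ∀ {m : ℤ} {u : V}, u ∈ A.gr m → ∀ (n : ℤ) {k : ℤ} {w : W}, w ∈ wgr k →
      Yw u n w ∈ wgr (k + m - n - 1))
    (hadd : ∀ (u v : V) (n : ℤ), Yw (u + v) n = Yw u n + Yw v n)
    (hsmul : ∀ (c : ℂ) (u : V) (n : ℤ), Yw (c • u) n = c • Yw u n)
    (hvac1 : ∀ w : W, Yw A.vac (-1) w = w)
    (hvac2 : ∀ n : ℤ, n ≠ -1 → Yw A.vac n = 0)
    (hmain : ∀ (u v : V) (w : W), ∃ k l : ℤ,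
      (∀ n : ℤ, k ≤ n → Yw v n w = 0) ∧ (∀ n : ℤ, l ≤ n → Yw u n w = 0) ∧
      (∀ p q : ℤ, q < k →
        Yw u p (Yw v q w) =
          ∑ i ∈ Finset.range (k - q).toNat, ∑ j ∈ Finset.range (l.toNat + 1),
            (gb (p - l) i * gb l j) •
              Yw (A.coeff u (p - l - i + j) v) (q + l + i - j) w) ∧
      (∀ p q i : ℤ, k - q ≤ i →
        ∑ j ∈ Finset.range (l.toNat + 1),
          gb l j • Yw (A.coeff u (p - i - j) v) (q + i + j) w = 0)) :
    IsWeakModule A.toVertexAlgebra Yw ∧ IsNNGradedModule A Yw wgr := by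
  have g : Good Yw := ⟨hadd, hsmul, fun u w => by
    obtain ⟨k, l, -, h, -⟩ := hmain u u w
    exact ⟨l, h⟩⟩
  have hpos : ∀ (u v : V) (w : W), Yw u (-1) w ≠ 0 → PVan A.toVertexAlgebra Yw u v w := by
    intro u v w hne
    obtain ⟨k, l, h1, h2, h3, h4⟩ := hmain u v w
    have hl : 0 ≤ l := by
      by_contra hc
      exact hne (h2 (-1) (by omega))
    obtain ⟨n, rfl⟩ := Int.eq_ofNat_of_zero_le hl
    exact PVan_of_assoc A.toVertexAlgebra g u v w k n h1 h2 h3 h4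
  have hp : ∀ u v w, PVan A.toVertexAlgebra Yw u v w := by
    intro u v w
    by_cases hne : Yw u (-1) w = 0
    · by_cases hw : w = 0
      · subst hw
        refine ⟨0, fun p q r _ => ?_⟩
        unfold Jf Lf Pf
        rw [bsum_of_zero, bsum_of_zero, bsum_of_zero] <;> simp
      · obtain ⟨l1, hl1⟩ := hpos A.vac v w (by rwa [hvac1])
        obtain ⟨l2, hl2⟩ := hpos (u + A.vac) v w (by
          rw [hadd, LinearMap.add_apply, hne, hvac1, zero_add]; exact hw)
        refine ⟨max l1 l2, fun p q r hpp => ?_⟩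
        have := hl2 p q r (le_trans (le_max_right _ _) hpp)
        rw [Jf_add _ g, hl1 p q r (le_trans (le_max_left _ _) hpp), add_zero] at this
        exact this
    · exact hpos u v w hne
  refine ⟨⟨hadd, hsmul, g.trunc, hvac1, hvac2, fun u v w p q r => ?_⟩, hinternal, hnonneg, hgrade⟩
  exact borcherds_of_Jf _ g u v w p q r (Jf_zero _ g hvac1 hvac2 hp u v w p q r)
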